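/- (Affine Poincaré lemma.) Let A be a finite-dimensional real affine space over V. (i) If a quadratic function δ : A → ℝ with Hessian B satisfies δ(P + v) − δ(P) = (1/2)·B(v, v) for all P ∈ A and v ∈ V, then δ is constant. (ii) Let ω : A → V* be an affine map and let L : V → V* be its linear part, so that L(x)(y) = ω(P + x)(y) − ω(P)(y) for any point P ∈ A. If L is self-adjoint, i.e. L(x)(y) = L(y)(x) for all x, y ∈ V, then there exists a quadratic function δ : A → ℝ such that ω(P)(v) = δ(P + v) − δ(P) − (1/2)·L(v)(v) for all P ∈ A and v ∈ V. -/

import Mathlib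

/-!
For (i), the increments of `δ` from `P` to `Q` and from `Q` to `P` are opposite, yet both equal
`B(v, v) / 2` with `v = Q - P`, because `B(v, v)` is even in `v`; hence both vanish.

For (ii), fix an origin `O` and integrate `ω` along the segment from `O` to `P`, which gives
`δ(P) = ω(O)(P - O) + L(P - O)(P - O) / 2`. This is a linear plus a quadratic form in `P - O`, and
symmetry of `L` turns the cross terms of `δ(P + v) - δ(P)` into `L(P - O)(v) = ω(P)(v) - ω(O)(v)`.
-/

/-- A function `δ : A → ℝ` on a real affine space is *quadratic* if for all points
`P, Q` and all `α, β ∈ ℝ` with `α + β = 1`,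
`δ(α·P + β·Q) = α(α−β)·δ(P) + β(β−α)·δ(Q) + 4αβ·δ(midpoint(P,Q))`
(note `α·P + β·Q = lineMap P Q β`). -/
def IsQuadraticFn {V A : Type*} [AddCommGroup V] [Module ℝ V] [AddTorsor V A]
    (δ : A → ℝ) : Prop :=
  ∀ (P Q : A) (α β : ℝ), α + β = 1 →
    δ (AffineMap.lineMap P Q β) =
      α * (α - β) * δ P + β * (β - α) * δ Q + 4 * α * β * δ (midpoint ℝ P Q)

/-- `B` is the Hessian of the quadratic function `δ`:
`2δ(P) + 2δ(Q) − 4δ(midpoint(P,Q)) = (1/2)·B(Q−P, Q−P)` for all `P, Q`. -/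
def IsHessianOf {V A : Type*} [AddCommGroup V] [Module ℝ V] [AddTorsor V A]
    (δ : A → ℝ) (B : LinearMap.BilinForm ℝ V) : Prop :=
  ∀ P Q : A, 2 * δ P + 2 * δ Q - 4 * δ (midpoint ℝ P Q) =
    (1/2 : ℝ) * B (Q -ᵥ P) (Q -ᵥ P)

section AffineQuadratic

variable {R V W A A' M : Type*} [CommRing R] [Invertible (2 : R)]
  [AddCommGroup V] [Module R V] [AddTorsor V A] [AddCommGroup W] [Module R W] [AddTorsor W A']
  [AddCommGroup M] [Module R M]

variable (R) in
/-- Quadratic maps from an affine space to a module over a commutative ring in which `2` is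
invertible. The condition is `IsQuadraticFn` over an arbitrary ring: on each line, `δ` is given by
Lagrange interpolation at two points and their midpoint. -/
def IsAffineQuadratic (δ : A → M) : Prop :=
  ∀ (P Q : A) (α β : R), α + β = 1 →
    δ (AffineMap.lineMap P Q β) =
      (α * (α - β)) • δ P + (β * (β - α)) • δ Q + (4 * α * β) • δ (midpoint R P Q)

theorem IsAffineQuadratic.add {δ ε : A → M} (hδ : IsAffineQuadratic R δ)
    (hε : IsAffineQuadratic R ε) : IsAffineQuadratic R (δ + ε) := by
  intro P Q α β hαβ
  simp only [Pi.add_apply, hδ P Q α β hαβ, hε P Q α β hαβ]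
  module

theorem IsAffineQuadratic.comp_affineMap {δ : A' → M} (hδ : IsAffineQuadratic R δ)
    (f : A →ᵃ[R] A') : IsAffineQuadratic R (δ ∘ f) := by
  intro P Q α β hαβ
  simp only [Function.comp_apply, AffineMap.apply_lineMap, AffineMap.map_midpoint]
  exact hδ (f P) (f Q) α β hαβ

theorem isAffineQuadratic_affineMap (f : A →ᵃ[R] M) : IsAffineQuadratic R f := by
  intro P Q α β hαβ
  obtain rfl : α = 1 - β := eq_sub_of_add_eq hαβ
  have two_smul_midpoint : (2 : R) • f (midpoint R P Q) = f P + f Q := by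
    rw [f.map_midpoint, midpoint_eq_smul_add, smul_invOf_smul]
  have coeff_smul_midpoint :
      (4 * (1 - β) * β) • f (midpoint R P Q) = (2 * (1 - β) * β) • (f P + f Q) := by
    rw [← two_smul_midpoint]
    module
  rw [coeff_smul_midpoint, f.apply_lineMap, AffineMap.lineMap_apply_module]
  module

theorem isAffineQuadratic_quadraticMap (q : QuadraticMap R V M) : IsAffineQuadratic R q := by
  intro x y α β hαβ
  obtain rfl : α = 1 - β := eq_sub_of_add_eq hαβ
  have four_smul_midpoint : (4 : R) • q (midpoint R x y) = q (x + y) := by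
    rw [show (4 : R) = 2 * 2 by norm_num, ← q.map_smul, midpoint_eq_smul_add, smul_invOf_smul]
  have coeff_smul_midpoint :
      (4 * (1 - β) * β) • q (midpoint R x y) = ((1 - β) * β) • q (x + y) := by
    rw [← four_smul_midpoint]
    module
  rw [coeff_smul_midpoint, AffineMap.lineMap_apply_module, QuadraticMap.map_add q,
    QuadraticMap.map_add q x, q.map_smul, q.map_smul, q.polar_smul_left, q.polar_smul_right]
  module

end AffineQuadratic

theorem eq_of_vadd_sub_eq_even {G A M : Type*} [AddGroup G] [AddTorsor G A] [AddCommGroup M]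
    (two_torsion_free : ∀ x : M, x + x = 0 → x = 0) {δ : A → M} {q : G → M} (hq : q.Even)
    (h : ∀ P v, δ (v +ᵥ P) - δ P = q v) (P Q : A) : δ P = δ Q := by
  have increment (P Q : A) : δ Q - δ P = q (Q -ᵥ P) := by
    rw [← h P, vsub_vadd]
  have increment_symm : δ P - δ Q = δ Q - δ P := by
    rw [increment P Q, increment Q P, ← neg_vsub_eq_vsub_rev, hq]
  refine sub_eq_zero.mp (two_torsion_free _ ?_)
  nth_rw 2 [increment_symm]
  rw [sub_add_sub_cancel, sub_self]

section Primitive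

variable {R V A M : Type*} [CommRing R] [Invertible (2 : R)]
  [AddCommGroup V] [Module R V] [AddTorsor V A] [AddCommGroup M] [Module R M]

/-- The integral of the affine `1`-form `ω` along the segment from `O` to `P`, as a function of
`P`, written in closed form so that it makes sense over any ring in which `2` is invertible. -/
def segmentPrimitive (ω : A →ᵃ[R] V →ₗ[R] M) (O P : A) : M :=
  ω O (P -ᵥ O) + ⅟(2 : R) • ω.linear (P -ᵥ O) (P -ᵥ O)

theorem isAffineQuadratic_segmentPrimitive (ω : A →ᵃ[R] V →ₗ[R] M) (O : A) :
    IsAffineQuadratic R (segmentPrimitive ω O) :=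
  ((isAffineQuadratic_affineMap (ω O).toAffineMap).add
    (isAffineQuadratic_quadraticMap
      (⅟(2 : R) • LinearMap.BilinMap.toQuadraticMap ω.linear))).comp_affineMap
    (AffineEquiv.vaddConst R O).symm.toAffineMap

theorem segmentPrimitive_vadd_sub (ω : A →ᵃ[R] V →ₗ[R] M)
    (hω : ∀ x y, ω.linear x y = ω.linear y x) (O P : A) (v : V) :
    segmentPrimitive ω O (v +ᵥ P) - segmentPrimitive ω O P =
      ω P v + ⅟(2 : R) • ω.linear v v := by
  have ω_eq : ω P = ω.linear (P -ᵥ O) + ω O := by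
    rw [← vadd_eq_add, ← ω.map_vadd, vsub_vadd]
  have cross_terms :
      ⅟(2 : R) • (ω.linear v (P -ᵥ O) + ω.linear (P -ᵥ O) v) = ω.linear (P -ᵥ O) v := by
    rw [hω v, ← two_smul R, invOf_smul_smul]
  rw [ω_eq, LinearMap.add_apply, ← cross_terms]
  simp only [segmentPrimitive, vadd_vsub_assoc, map_add, LinearMap.add_apply]
  module

end Primitive

theorem stmt2_general (R : Type*) {V A M : Type*} [CommRing R] [Invertible (2 : R)]
    [AddCommGroup V] [Module R V] [AddTorsor V A] [AddCommGroup M] [Module R M] :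
    (∀ (δ : A → M) (q : V → M), q.Even → (∀ (P : A) (v : V), δ (v +ᵥ P) - δ P = q v) →
        ∀ P Q : A, δ P = δ Q) ∧
    (∀ ω : A →ᵃ[R] V →ₗ[R] M, (∀ x y : V, ω.linear x y = ω.linear y x) →
        ∃ δ : A → M, IsAffineQuadratic R δ ∧
          ∀ (P : A) (v : V), ω P v = δ (v +ᵥ P) - δ P - ⅟(2 : R) • ω.linear v v) := by
  have two_torsion_free (x : M) (hx : x + x = 0) : x = 0 := by
    rw [← invOf_smul_smul (2 : R) x, two_smul, hx, smul_zero]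
  refine ⟨fun δ q => eq_of_vadd_sub_eq_even two_torsion_free, fun ω hω => ?_⟩
  obtain ⟨O⟩ : Nonempty A := inferInstance
  refine ⟨segmentPrimitive ω O, isAffineQuadratic_segmentPrimitive ω O, fun P v => ?_⟩
  rw [segmentPrimitive_vadd_sub ω hω, add_sub_cancel_right]

/-- Affine Poincaré lemma.
(i) If a quadratic function `δ : A → ℝ` with (symmetric) Hessian `B` satisfies
`δ(P + v) − δ(P) = (1/2)·B(v,v)` for all `P ∈ A`, `v ∈ V`, then `δ` is constant.
(ii) If `ω : A → V*` is an affine map whose linear part `L` is self-adjoint, then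
there is a quadratic `δ : A → ℝ` with
`ω(P)(v) = δ(P + v) − δ(P) − (1/2)·L(v)(v)` for all `P, v`. -/
theorem stmt2 {V A : Type*} [AddCommGroup V] [Module ℝ V] [AddTorsor V A]
    [FiniteDimensional ℝ V] :
    (∀ (δ : A → ℝ) (B : LinearMap.BilinForm ℝ V), IsQuadraticFn δ →
        (∀ x y, B x y = B y x) → IsHessianOf δ B →
        (∀ (P : A) (v : V), δ (v +ᵥ P) - δ P = (1/2 : ℝ) * B v v) →
        ∀ P Q : A, δ P = δ Q) ∧
    (∀ ω : A →ᵃ[ℝ] Module.Dual ℝ V,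
        (∀ x y : V, ω.linear x y = ω.linear y x) →
        ∃ δ : A → ℝ, IsQuadraticFn δ ∧
          ∀ (P : A) (v : V),
            ω P v = δ (v +ᵥ P) - δ P - (1/2 : ℝ) * ω.linear v v) := by
  exact ⟨fun δ B _ _ _ => (stmt2_general ℝ).1 δ _ fun v => by simp,
    fun ω hω => by simpa [IsAffineQuadratic, IsQuadraticFn] using (stmt2_general ℝ).2 ω hω⟩
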